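/- Let m1, m2, m3, m4 > 0 and M = m1+m2+m3+m4. There exists exactly one r ∈ ℝ⁶ with all six coordinates positive satisfying I(r) = 1, F(r) = 0, and for which there exist real numbers λ and σ with ∇U(r) + λ M ∇I(r) + σ ∇F(r) = 0. Equivalently, the restriction of the Newtonian potential U to the set M⁺ = { r : r_ij ≥ 0, I(r) = 1, F(r) = 0 } has a unique critical point. -/

import Mathlib

noncomputable section

/-- `F` as a function of the vector of mutual distances
`r = (r12, r13, r14, r23, r24, r34)` (indexed `0,…,5`). -/
def F (r : Fin 6 → ℝ) : ℝ :=
  2 * r 0 * r 5 - (r 1) ^ 2 - (r 4) ^ 2 + (r 3) ^ 2 + (r 2) ^ 2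

/-- The Newtonian potential `U(r) = Σ_{i<j} m_i m_j / r_ij`. -/
def U (m1 m2 m3 m4 : ℝ) (r : Fin 6 → ℝ) : ℝ :=
  m1 * m2 / r 0 + m1 * m3 / r 1 + m1 * m4 / r 2 +
    m2 * m3 / r 3 + m2 * m4 / r 4 + m3 * m4 / r 5

/-- The moment of inertia `I(r) = (1/(2M)) Σ_{i<j} m_i m_j r_ij²`. -/
def Iner (m1 m2 m3 m4 : ℝ) (r : Fin 6 → ℝ) : ℝ :=
  (1 / (2 * (m1 + m2 + m3 + m4))) *
    (m1 * m2 * (r 0) ^ 2 + m1 * m3 * (r 1) ^ 2 + m1 * m4 * (r 2) ^ 2 +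
      m2 * m3 * (r 3) ^ 2 + m2 * m4 * (r 4) ^ 2 + m3 * m4 * (r 5) ^ 2)

/-! The six distances enter `U` and `I` only through the positive weights `m_i m_j`, and any six
positive weights will do. The equation `F = 0` says that the four bodies form a trapezoid with bases
`r12`, `r34`, diagonals `r13`, `r24` and legs `r14`, `r23`.

Existence: `U` blows up at the boundary of the compact set `M⁺`, so it has a minimum in the
interior, where `∇I` and `∇F` are linearly independent.

Uniqueness: by Euler's identity `λ > 0`, so by homogeneity one may rescale to `λ = 1`. At `σ = 0`
all distances are equal to `1` and `F > 0`. As `σ` grows the diagonals get longer and the legs get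
shorter, and for `σ ≥ 0` the bases get shorter too; hence `F = 0` forces `σ ≥ 0`, and `F`, being
strictly monotone along these changes, vanishes only once. -/

section WeightedPotential

variable {ι : Type*} [Fintype ι]

/-- The potential `Σ wᵢ / rᵢ`, with arbitrary weights in place of the products of two masses. -/
def weightedPotential (w r : ι → ℝ) : ℝ :=
  ∑ i, w i / r i

/-- Half the quadratic form `Σ wᵢ rᵢ²`, that is `M` times the moment of inertia, with arbitrary
weights in place of the products of two masses. -/
def weightedInertia (w r : ι → ℝ) : ℝ :=
  (∑ i, w i * r i ^ 2) / 2

lemma continuous_weightedInertia (w : ι → ℝ) : Continuous (weightedInertia w) := by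
  unfold weightedInertia
  fun_prop

lemma two_mul_weightedInertia (w r : ι → ℝ) : 2 * weightedInertia w r = ∑ i, w i * r i ^ 2 :=
  mul_div_cancel₀ _ two_ne_zero

lemma weightedInertia_smul (w : ι → ℝ) (c : ℝ) (r : ι → ℝ) :
    weightedInertia w (c • r) = c ^ 2 * weightedInertia w r := by
  simp only [weightedInertia, Pi.smul_apply, smul_eq_mul, mul_pow, mul_left_comm _ (c ^ 2),
    ← Finset.mul_sum, mul_div_assoc]

section Positivity

variable {w r : ι → ℝ}

lemma weightedPotential_pos [Nonempty ι] (hw : ∀ i, 0 < w i) (hr : ∀ i, 0 < r i) :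
    0 < weightedPotential w r :=
  Finset.sum_pos (fun i _ => div_pos (hw i) (hr i)) Finset.univ_nonempty

lemma weightedInertia_pos [Nonempty ι] (hw : ∀ i, 0 < w i) (hr : ∀ i, 0 < r i) :
    0 < weightedInertia w r :=
  half_pos (Finset.sum_pos (fun i _ => mul_pos (hw i) (pow_pos (hr i) 2)) Finset.univ_nonempty)

lemma div_le_weightedPotential (hw : ∀ i, 0 ≤ w i) (hr : ∀ i, 0 < r i) (i : ι) :
    w i / r i ≤ weightedPotential w r :=
  Finset.single_le_sum (f := fun i => w i / r i) (fun j _ => div_nonneg (hw j) (hr j).le)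
    (Finset.mem_univ i)

lemma mul_sq_le_two_mul_weightedInertia (hw : ∀ i, 0 ≤ w i) (i : ι) :
    w i * r i ^ 2 ≤ 2 * weightedInertia w r := by
  rw [two_mul_weightedInertia]
  exact Finset.single_le_sum (f := fun i => w i * r i ^ 2)
    (fun j _ => mul_nonneg (hw j) (sq_nonneg _)) (Finset.mem_univ i)

end Positivity

lemma isCompact_setOf_weightedInertia_eq {w : ι → ℝ} (hw : ∀ i, 0 < w i) (c : ℝ) :
    IsCompact {r | weightedInertia w r = c} := by
  refine (isCompact_Icc (a := fun i => -√(2 * c / w i))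
    (b := fun i => √(2 * c / w i))).of_isClosed_subset
      (isClosed_eq (continuous_weightedInertia w) continuous_const) ?_
  rintro r rfl
  have hbound (i : ι) : |r i| ≤ √(2 * weightedInertia w r / w i) :=
    Real.abs_le_sqrt <| (le_div_iff₀' (hw i)).2 <|
      mul_sq_le_two_mul_weightedInertia (fun j => (hw j).le) i
  exact ⟨fun i => (abs_le.1 (hbound i)).1, fun i => (abs_le.1 (hbound i)).2⟩

/-- On the part of `S` where no coordinate is below `wᵢ / U(r₀)` the potential is continuous;
elsewhere in the positive orthant it exceeds `U(r₀)`. -/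
lemma exists_isLocalMinOn_weightedPotential [Nonempty ι] {w : ι → ℝ} (hw : ∀ i, 0 < w i)
    {S : Set (ι → ℝ)} (hS : IsCompact S) {r₀ : ι → ℝ} (hr₀S : r₀ ∈ S) (hr₀ : ∀ i, 0 < r₀ i) :
    ∃ r ∈ S, (∀ i, 0 < r i) ∧ IsLocalMinOn (weightedPotential w) S r := by
  set u := weightedPotential w r₀
  have hu_pos : 0 < u := weightedPotential_pos hw hr₀
  set K := S ∩ Set.Ici fun i => w i / u
  have pos_of_mem {r : ι → ℝ} (hr : r ∈ K) (i : ι) : 0 < r i :=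
    (div_pos (hw i) hu_pos).trans_le (hr.2 i)
  have mem_of_le {r : ι → ℝ} (hrS : r ∈ S) (hr : ∀ i, 0 < r i) (hru : weightedPotential w r ≤ u) :
      r ∈ K :=
    ⟨hrS, fun i => (div_le_comm₀ (hr i) hu_pos).1
      ((div_le_weightedPotential (fun j => (hw j).le) hr i).trans hru)⟩
  have hcont : ContinuousOn (weightedPotential w) K :=
    continuousOn_finsetSum _ fun i _ =>
      continuousOn_const.div (continuous_apply i).continuousOn fun r hr => (pos_of_mem hr i).ne'
  have hr₀K : r₀ ∈ K := mem_of_le hr₀S hr₀ le_rfl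
  obtain ⟨r, hrK, hmin⟩ := (hS.inter_right isClosed_Ici).exists_isMinOn ⟨r₀, hr₀K⟩ hcont
  refine ⟨r, hrK.1, pos_of_mem hrK, ?_⟩
  have hpos : ∀ᶠ z in nhdsWithin r S, ∀ i, 0 < z i :=
    Filter.eventually_all.2 fun i => nhdsWithin_le_nhds <|
      (continuous_apply i).continuousAt.eventually (lt_mem_nhds (pos_of_mem hrK i))
  filter_upwards [hpos, self_mem_nhdsWithin] with z hz hzS
  rcases le_total (weightedPotential w z) u with hzu | huz
  · exact hmin (mem_of_le hzS hz hzu)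
  · exact (hmin hr₀K).trans huz

end WeightedPotential

section Derivatives

variable {ι : Type*} [Fintype ι] [DecidableEq ι]

/-- The identification of a vector `c` with the continuous linear form `v ↦ c ⬝ᵥ v`. It turns
gradients, which Mathlib reserves for inner product spaces, into Fréchet derivatives on `ι → ℝ`. -/
def dotProductCLM : (ι → ℝ) ≃ₗ[ℝ] ((ι → ℝ) →L[ℝ] ℝ) :=
  dotProductEquiv ℝ ι ≪≫ₗ LinearMap.toContinuousLinearMap

lemma dotProductCLM_apply (c v : ι → ℝ) : dotProductCLM c v = ∑ i, c i * v i :=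
  rfl

lemma hasStrictFDerivAt_sum_apply {f : ι → ℝ → ℝ} {f' r : ι → ℝ}
    (h : ∀ i, HasStrictDerivAt (f i) (f' i) (r i)) :
    HasStrictFDerivAt (fun v : ι → ℝ => ∑ i, f i (v i)) (dotProductCLM f') r := by
  have hproj : dotProductCLM f' =
      ∑ i, f' i • ContinuousLinearMap.proj (R := ℝ) (φ := fun _ : ι => ℝ) i := by
    ext v
    simp [dotProductCLM_apply]
  rw [hproj]
  exact HasStrictFDerivAt.fun_sum fun i _ =>
    (h i).comp_hasStrictFDerivAt r (hasStrictFDerivAt_apply i r)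

lemma hasStrictFDerivAt_weightedPotential (w : ι → ℝ) {r : ι → ℝ} (hr : ∀ i, r i ≠ 0) :
    HasStrictFDerivAt (weightedPotential w) (dotProductCLM fun i => -(w i / r i ^ 2)) r := by
  refine hasStrictFDerivAt_sum_apply (f := fun i x => w i / x) fun i => ?_
  simpa [div_eq_mul_inv] using (hasStrictDerivAt_inv (hr i)).const_mul (w i)

lemma hasStrictFDerivAt_weightedInertia (w r : ι → ℝ) :
    HasStrictFDerivAt (weightedInertia w) (dotProductCLM fun i => w i * r i) r := by
  have hsum : weightedInertia w = fun v => ∑ i, w i * v i ^ 2 / 2 :=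
    funext fun v => Finset.sum_div ..
  rw [hsum]
  refine hasStrictFDerivAt_sum_apply (f := fun i x => w i * x ^ 2 / 2) fun i => ?_
  refine (((hasStrictDerivAt_pow 2 (r i)).const_mul (w i)).div_const 2).congr_deriv ?_
  push_cast
  ring

end Derivatives

section Trapezoid

/-- The gradient of `F` in coordinates. -/
def gradF (r : Fin 6 → ℝ) : Fin 6 → ℝ :=
  ![2 * r 5, -(2 * r 1), 2 * r 2, 2 * r 3, -(2 * r 4), 2 * r 0]

lemma continuous_F : Continuous F := by
  unfold F
  fun_prop

lemma F_smul (c : ℝ) (r : Fin 6 → ℝ) : F (c • r) = c ^ 2 * F r := by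
  simp only [F, Pi.smul_apply, smul_eq_mul]
  ring

lemma gradF_smul (c : ℝ) (r : Fin 6 → ℝ) : gradF (c • r) = c • gradF r := by
  simp [gradF, mul_left_comm]

lemma sum_gradF_mul_self (r : Fin 6 → ℝ) : ∑ i, gradF r i * r i = 2 * F r := by
  simp only [gradF, Fin.isValue, Fin.sum_univ_six, Matrix.cons_val_zero, Matrix.cons_val_one,
    neg_mul, Matrix.cons_val, F]
  ring

lemma sum_lagrange_mul_self (w r : Fin 6 → ℝ) (a b : ℝ) :
    ∑ i, (a * (w i * r i) + b * gradF r i) * r i =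
      a * (2 * weightedInertia w r) + b * (2 * F r) := by
  rw [two_mul_weightedInertia, ← sum_gradF_mul_self, Finset.mul_sum, Finset.mul_sum,
    ← Finset.sum_add_distrib]
  exact Finset.sum_congr rfl fun i _ => by ring

lemma hasStrictFDerivAt_F (r : Fin 6 → ℝ) : HasStrictFDerivAt F (dotProductCLM (gradF r)) r := by
  have hcoord (i : Fin 6) := hasStrictFDerivAt_apply (𝕜 := ℝ) (F' := fun _ => ℝ) i r
  have h := ((((((hcoord 0).const_mul 2).mul (hcoord 5)).sub ((hcoord 1).pow 2)).sub
    ((hcoord 4).pow 2)).add ((hcoord 3).pow 2)).add ((hcoord 2).pow 2)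
  refine h.congr_fderiv ?_
  ext v
  simp only [Fin.isValue, Nat.add_one_sub_one, pow_one, nsmul_eq_mul, Nat.cast_ofNat,
    add_apply, sub_apply, smul_apply, ContinuousLinearMap.proj_apply, smul_eq_mul, gradF,
    dotProductCLM_apply, Fin.sum_univ_six, Matrix.cons_val_zero, Matrix.cons_val_one, neg_mul,
    Matrix.cons_val]
  ring

/-- The point constructed is a rescaled 3-4-5 rectangle. -/
lemma exists_pos_weightedInertia_eq_and_F_eq_zero {w : Fin 6 → ℝ} (hw : ∀ i, 0 < w i) {c : ℝ}
    (hc : 0 < c) : ∃ r : Fin 6 → ℝ, (∀ i, 0 < r i) ∧ weightedInertia w r = c ∧ F r = 0 := by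
  set ρ : Fin 6 → ℝ := ![3, 5, 4, 4, 5, 3] with hρ
  have hρ_pos : ∀ i, 0 < ρ i := by simp [hρ, Fin.forall_fin_succ]
  have hFρ : F ρ = 0 :=
    show (2 * 3 * 3 - 5 ^ 2 - 5 ^ 2 + 4 ^ 2 + 4 ^ 2 : ℝ) = 0 by norm_num
  have hI := weightedInertia_pos hw hρ_pos
  refine ⟨√(c / weightedInertia w ρ) • ρ, fun i => mul_pos (by positivity) (hρ_pos i), ?_, ?_⟩
  · rw [weightedInertia_smul, Real.sq_sqrt (by positivity), div_mul_cancel₀ _ hI.ne']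
  · rw [F_smul, hFρ, mul_zero]

lemma eq_of_F_le {r r' : Fin 6 → ℝ} (hr : ∀ i, 0 < r i) (hr' : ∀ i, 0 < r' i)
    (hbases : r' 0 ≤ r 0 ∧ r' 5 ≤ r 5) (hdiagonals : r 1 ≤ r' 1 ∧ r 4 ≤ r' 4)
    (hlegs : r' 2 ≤ r 2 ∧ r' 3 ≤ r 3) (hF : F r ≤ F r') : r = r' := by
  obtain ⟨h0, h5⟩ := hbases
  obtain ⟨h1, h4⟩ := hdiagonals
  obtain ⟨h2, h3⟩ := hlegs
  have sq_le {i : Fin 6} {x y : Fin 6 → ℝ} (hx : ∀ i, 0 < x i) (h : x i ≤ y i) :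
      x i ^ 2 ≤ y i ^ 2 := pow_le_pow_left₀ (hx i).le h 2
  have hsq1 := sq_le hr h1
  have hsq2 := sq_le hr' h2
  have hsq3 := sq_le hr' h3
  have hsq4 := sq_le hr h4
  have hprod0 : r' 0 * r' 5 ≤ r 0 * r' 5 := mul_le_mul_of_nonneg_right h0 (hr' 5).le
  have hprod5 : r 0 * r' 5 ≤ r 0 * r 5 := mul_le_mul_of_nonneg_left h5 (hr 0).le
  unfold F at hF
  have eq_of_sq_eq {i : Fin 6} (h : r i ^ 2 = r' i ^ 2) : r i = r' i :=
    (pow_left_inj₀ (hr i).le (hr' i).le two_ne_zero).1 h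
  have heq0 : r 0 = r' 0 :=
    mul_right_cancel₀ (hr' 5).ne' (by linarith : r 0 * r' 5 = r' 0 * r' 5)
  have heq1 : r 1 = r' 1 := eq_of_sq_eq (by linarith)
  have heq2 : r 2 = r' 2 := eq_of_sq_eq (by linarith)
  have heq3 : r 3 = r' 3 := eq_of_sq_eq (by linarith)
  have heq4 : r 4 = r' 4 := eq_of_sq_eq (by linarith)
  have heq5 : r 5 = r' 5 :=
    mul_left_cancel₀ (hr 0).ne' (by linarith : r 0 * r 5 = r 0 * r' 5)
  funext i
  fin_cases i <;> assumption

end Trapezoid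

section Lagrange

variable {w r : Fin 6 → ℝ} {lam sigma : ℝ}

/-- A positive solution `r` of `∇U + λ M ∇I + σ ∇F = 0` for the weights `w`, each equation being
multiplied by `rᵢ²`. The constraints on `I` and `F` are not included. -/
structure IsLagrangePoint (w : Fin 6 → ℝ) (lam sigma : ℝ) (r : Fin 6 → ℝ) : Prop where
  pos : ∀ i, 0 < r i
  lagrange : ∀ i, (lam * (w i * r i) + sigma * gradF r i) * r i ^ 2 = w i

lemma isLagrangePoint_one (w : Fin 6 → ℝ) : IsLagrangePoint w 1 0 1 where
  pos := by simp
  lagrange := by simp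

lemma fderiv_lagrangian_eq (hr : ∀ i, 0 < r i) (lam sigma : ℝ) :
    fderiv ℝ (weightedPotential w) r + lam • fderiv ℝ (weightedInertia w) r
        + sigma • fderiv ℝ F r =
      dotProductCLM fun i => -(w i / r i ^ 2) + (lam * (w i * r i) + sigma * gradF r i) := by
  rw [(hasStrictFDerivAt_weightedPotential w fun i => (hr i).ne').hasFDerivAt.fderiv,
    (hasStrictFDerivAt_weightedInertia w r).hasFDerivAt.fderiv,
    (hasStrictFDerivAt_F r).hasFDerivAt.fderiv, add_assoc]
  simp only [← map_smul, ← map_add]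
  rfl

lemma isLagrangePoint_iff_fderiv (hr : ∀ i, 0 < r i) :
    IsLagrangePoint w lam sigma r ↔
      fderiv ℝ (weightedPotential w) r + lam • fderiv ℝ (weightedInertia w) r
        + sigma • fderiv ℝ F r = 0 := by
  rw [fderiv_lagrangian_eq hr, map_eq_zero_iff _ dotProductCLM.injective, funext_iff]
  have coord_iff (i : Fin 6) : (lam * (w i * r i) + sigma * gradF r i) * r i ^ 2 = w i ↔
      -(w i / r i ^ 2) + (lam * (w i * r i) + sigma * gradF r i) = 0 := by
    rw [neg_add_eq_zero, div_eq_iff (pow_ne_zero 2 (hr i).ne'), eq_comm]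
  exact ⟨fun h i => (coord_iff i).1 (h.lagrange i), fun h => ⟨hr, fun i => (coord_iff i).2 (h i)⟩⟩

lemma IsLagrangePoint.smul (h : IsLagrangePoint w lam sigma r) {c : ℝ} (hc : 0 < c) :
    IsLagrangePoint w (lam / c ^ 3) (sigma / c ^ 3) (c • r) where
  pos i := mul_pos hc (h.pos i)
  lagrange i := by
    rw [gradF_smul, Pi.smul_apply, Pi.smul_apply, smul_eq_mul, smul_eq_mul]
    refine Eq.trans ?_ (h.lagrange i)
    field_simp

lemma IsLagrangePoint.weightedPotential_eq (h : IsLagrangePoint w lam sigma r) :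
    weightedPotential w r = lam * (2 * weightedInertia w r) + sigma * (2 * F r) := by
  rw [← sum_lagrange_mul_self]
  refine Finset.sum_congr rfl fun i _ => (div_eq_iff (h.pos i).ne').2 ?_
  linear_combination -h.lagrange i

lemma IsLagrangePoint.lam_pos (hw : ∀ i, 0 < w i) (h : IsLagrangePoint w lam sigma r)
    (hF : F r = 0) : 0 < lam := by
  have hU := weightedPotential_pos hw h.pos
  rw [h.weightedPotential_eq, hF, mul_zero, mul_zero, add_zero] at hU
  exact pos_of_mul_pos_left hU (mul_nonneg zero_le_two (weightedInertia_pos hw h.pos).le)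

lemma IsLagrangePoint.exists_smul_lam_eq_one (hw : ∀ i, 0 < w i)
    (h : IsLagrangePoint w lam sigma r) (hF : F r = 0) :
    ∃ c sigma' : ℝ, 0 < c ∧ IsLagrangePoint w 1 sigma' (c • r) := by
  have hlam := h.lam_pos hw hF
  have hc : 0 < lam ^ ((3 : ℕ) : ℝ)⁻¹ := Real.rpow_pos_of_pos hlam _
  have hc3 := Real.rpow_inv_natCast_pow hlam.le three_ne_zero
  refine ⟨lam ^ ((3 : ℕ) : ℝ)⁻¹, sigma / lam, hc, ?_⟩
  have hscaled := h.smul hc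
  rwa [hc3, div_self hlam.ne'] at hscaled

end Lagrange

section Monotonicity

lemma le_of_mul_cube_eq {a b b' x x' : ℝ} (ha : 0 < a) (hx : 0 < x) (hx' : 0 < x')
    (h : b * x ^ 3 = a) (h' : b' * x' ^ 3 = a) (hb : b ≤ b') : x' ≤ x := by
  rw [← eq_div_iff (by positivity)] at h h'
  rw [h, h', div_le_div_iff_of_pos_left ha (by positivity) (by positivity)] at hb
  exact (pow_le_pow_iff_left₀ hx'.le hx.le three_ne_zero).1 hb

lemma le_of_mul_cube_add_mul_eq {a t t' x x' : ℝ} (ha : 0 < a) (hx : 0 < x) (hx' : 0 < x')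
    (h : a * x ^ 3 + t * x = a) (h' : a * x' ^ 3 + t' * x' = a) (ht : t ≤ t') : x' ≤ x := by
  have ht_eq : t = a * (x⁻¹ - x ^ 2) := by field_simp; linarith
  have ht'_eq : t' = a * (x'⁻¹ - x' ^ 2) := by field_simp; linarith
  contrapose! ht
  rw [ht_eq, ht'_eq]
  gcongr

variable {w r r' : Fin 6 → ℝ} {sigma sigma' : ℝ}

lemma IsLagrangePoint.diagonals_le (hw : ∀ i, 0 < w i) (h : IsLagrangePoint w 1 sigma r)
    (h' : IsLagrangePoint w 1 sigma' r') (hsigma : sigma ≤ sigma') : r 1 ≤ r' 1 ∧ r 4 ≤ r' 4 := by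
  have cube_eq {s : ℝ} {x : Fin 6 → ℝ} (hx : IsLagrangePoint w 1 s x) :
      (w 1 - 2 * s) * x 1 ^ 3 = w 1 ∧ (w 4 - 2 * s) * x 4 ^ 3 = w 4 := by
    have h1 : (1 * (w 1 * x 1) + s * -(2 * x 1)) * x 1 ^ 2 = w 1 := hx.lagrange 1
    have h4 : (1 * (w 4 * x 4) + s * -(2 * x 4)) * x 4 ^ 2 = w 4 := hx.lagrange 4
    exact ⟨by linear_combination h1, by linear_combination h4⟩
  exact ⟨le_of_mul_cube_eq (hw 1) (h'.pos 1) (h.pos 1) (cube_eq h').1 (cube_eq h).1 (by linarith),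
    le_of_mul_cube_eq (hw 4) (h'.pos 4) (h.pos 4) (cube_eq h').2 (cube_eq h).2 (by linarith)⟩

lemma IsLagrangePoint.legs_le (hw : ∀ i, 0 < w i) (h : IsLagrangePoint w 1 sigma r)
    (h' : IsLagrangePoint w 1 sigma' r') (hsigma : sigma ≤ sigma') : r' 2 ≤ r 2 ∧ r' 3 ≤ r 3 := by
  have cube_eq {s : ℝ} {x : Fin 6 → ℝ} (hx : IsLagrangePoint w 1 s x) :
      (w 2 + 2 * s) * x 2 ^ 3 = w 2 ∧ (w 3 + 2 * s) * x 3 ^ 3 = w 3 := by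
    have h2 : (1 * (w 2 * x 2) + s * (2 * x 2)) * x 2 ^ 2 = w 2 := hx.lagrange 2
    have h3 : (1 * (w 3 * x 3) + s * (2 * x 3)) * x 3 ^ 2 = w 3 := hx.lagrange 3
    exact ⟨by linear_combination h2, by linear_combination h3⟩
  exact ⟨le_of_mul_cube_eq (hw 2) (h.pos 2) (h'.pos 2) (cube_eq h).1 (cube_eq h').1 (by linarith),
    le_of_mul_cube_eq (hw 3) (h.pos 3) (h'.pos 3) (cube_eq h).2 (cube_eq h').2 (by linarith)⟩

/-- The two equations for the bases are coupled only through `t = 2 σ r₀ r₅`, which is monotone in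
`σ`: were it to decrease, both bases would get longer, and `t` would increase with them. -/
lemma IsLagrangePoint.bases_le (hw : ∀ i, 0 < w i) (h : IsLagrangePoint w 1 sigma r)
    (h' : IsLagrangePoint w 1 sigma' r') (hsigma' : 0 ≤ sigma') (hsigma : sigma ≤ sigma') :
    r' 0 ≤ r 0 ∧ r' 5 ≤ r 5 := by
  have cubic_eq {s : ℝ} {x : Fin 6 → ℝ} (hx : IsLagrangePoint w 1 s x) :
      w 0 * x 0 ^ 3 + 2 * (s * (x 0 * x 5)) * x 0 = w 0 ∧
        w 5 * x 5 ^ 3 + 2 * (s * (x 0 * x 5)) * x 5 = w 5 := by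
    have h0 : (1 * (w 0 * x 0) + s * (2 * x 5)) * x 0 ^ 2 = w 0 := hx.lagrange 0
    have h5 : (1 * (w 5 * x 5) + s * (2 * x 0)) * x 5 ^ 2 = w 5 := hx.lagrange 5
    exact ⟨by linear_combination h0, by linear_combination h5⟩
  have antitone_in_t {s s' : ℝ} {x x' : Fin 6 → ℝ} (hx : IsLagrangePoint w 1 s x)
      (hx' : IsLagrangePoint w 1 s' x') (ht : s * (x 0 * x 5) ≤ s' * (x' 0 * x' 5)) :
      x' 0 ≤ x 0 ∧ x' 5 ≤ x 5 :=
    ⟨le_of_mul_cube_add_mul_eq (hw 0) (hx.pos 0) (hx'.pos 0) (cubic_eq hx).1 (cubic_eq hx').1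
        (by linarith),
      le_of_mul_cube_add_mul_eq (hw 5) (hx.pos 5) (hx'.pos 5) (cubic_eq hx).2 (cubic_eq hx').2
        (by linarith)⟩
  refine antitone_in_t h h' ?_
  by_contra! hlt
  obtain ⟨h0, h5⟩ := antitone_in_t h' h hlt.le
  have hprod : r 0 * r 5 ≤ r' 0 * r' 5 := mul_le_mul h0 h5 (h.pos 5).le (h'.pos 0).le
  have hprod_pos : 0 < r 0 * r 5 := mul_pos (h.pos 0) (h.pos 5)
  exact hlt.not_ge <| (mul_le_mul_of_nonneg_right hsigma hprod_pos.le).trans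
    (mul_le_mul_of_nonneg_left hprod hsigma')

lemma IsLagrangePoint.sigma_nonneg (hw : ∀ i, 0 < w i) (h : IsLagrangePoint w 1 sigma r)
    (hF : F r = 0) : 0 ≤ sigma := by
  by_contra! hneg
  obtain ⟨h1, h4⟩ := h.diagonals_le hw (isLagrangePoint_one w) hneg.le
  obtain ⟨h2, h3⟩ := h.legs_le hw (isLagrangePoint_one w) hneg.le
  simp only [Pi.one_apply] at h1 h2 h3 h4
  have hbases : 0 < r 0 * r 5 := mul_pos (h.pos 0) (h.pos 5)
  have hdiagonals : r 1 ^ 2 + r 4 ^ 2 ≤ 1 + 1 :=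
    add_le_add (pow_le_one₀ (h.pos 1).le h1) (pow_le_one₀ (h.pos 4).le h4)
  have hlegs : 1 + 1 ≤ r 2 ^ 2 + r 3 ^ 2 := add_le_add (one_le_pow₀ h2) (one_le_pow₀ h3)
  unfold F at hF
  linarith

lemma IsLagrangePoint.eq_of_lam_eq_one (hw : ∀ i, 0 < w i) (h : IsLagrangePoint w 1 sigma r)
    (h' : IsLagrangePoint w 1 sigma' r') (hF : F r = 0) (hF' : F r' = 0) : r = r' := by
  wlog hsigma : sigma ≤ sigma' generalizing r r' sigma sigma'
  · exact (this h' h hF' hF (le_of_not_ge hsigma)).symm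
  exact eq_of_F_le h.pos h'.pos (h.bases_le hw h' (h'.sigma_nonneg hw hF') hsigma)
    (h.diagonals_le hw h' hsigma) (h.legs_le hw h' hsigma) (hF.trans hF'.symm).le

end Monotonicity

lemma IsLagrangePoint.eq_of_weightedInertia_eq {w r r' : Fin 6 → ℝ} {lam sigma lam' sigma' : ℝ}
    (hw : ∀ i, 0 < w i) (h : IsLagrangePoint w lam sigma r) (h' : IsLagrangePoint w lam' sigma' r')
    (hF : F r = 0) (hF' : F r' = 0) (hI : weightedInertia w r = weightedInertia w r') :
    r = r' := by
  obtain ⟨c, s, hc, hs⟩ := h.exists_smul_lam_eq_one hw hF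
  obtain ⟨c', s', hc', hs'⟩ := h'.exists_smul_lam_eq_one hw hF'
  have hsmul : c • r = c' • r' :=
    hs.eq_of_lam_eq_one hw hs' (by rw [F_smul, hF, mul_zero]) (by rw [F_smul, hF', mul_zero])
  have hsq : c ^ 2 = c' ^ 2 := by
    have hI_smul := congrArg (weightedInertia w) hsmul
    rw [weightedInertia_smul, weightedInertia_smul, ← hI] at hI_smul
    exact mul_right_cancel₀ (weightedInertia_pos hw h.pos).ne' hI_smul
  obtain rfl := (pow_left_inj₀ hc.le hc'.le two_ne_zero).1 hsq
  exact smul_right_injective _ hc.ne' hsmul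

lemma exists_multipliers_of_linearIndependent {E κ : Type*} [NormedAddCommGroup E]
    [NormedSpace ℝ E] [CompleteSpace E] [Fintype κ] {φ : E → ℝ} {φ' : E →L[ℝ] ℝ} {f : κ → E → ℝ}
    {f' : κ → E →L[ℝ] ℝ} {x : E} (hextr : IsLocalExtrOn φ {z | ∀ k, f k z = f k x} x)
    (hφ : HasStrictFDerivAt φ φ' x) (hf : ∀ k, HasStrictFDerivAt (f k) (f' k) x)
    (hind : LinearIndependent ℝ f') :
    ∃ Λ : κ → ℝ, φ' + ∑ k, Λ k • f' k = 0 := by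
  obtain ⟨Λ, Λ₀, hne, hsum⟩ := hextr.exists_multipliers_of_hasStrictFDerivAt hf hφ
  have hΛ₀ : Λ₀ ≠ 0 := by
    rintro rfl
    rw [zero_smul, add_zero] at hsum
    exact hne (Prod.ext (funext (Fintype.linearIndependent_iff.1 hind Λ hsum)) rfl)
  refine ⟨Λ₀⁻¹ • Λ, (smul_right_injective _ hΛ₀) ?_⟩
  simpa [Finset.smul_sum, smul_smul, hΛ₀, add_comm] using hsum

lemma linearIndependent_gradients {w r : Fin 6 → ℝ} (hw : ∀ i, 0 < w i) (hr : ∀ i, 0 < r i)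
    (hF : F r = 0) : LinearIndependent ℝ ![fun i => w i * r i, gradF r] := by
  rw [LinearIndependent.pair_iff]
  intro a b hab
  have ha : a = 0 := by
    have hdot := sum_lagrange_mul_self w r a b
    have hcoord (i : Fin 6) : a * (w i * r i) + b * gradF r i = 0 := congrFun hab i
    simp only [hcoord, zero_mul, Finset.sum_const_zero, hF, mul_zero, add_zero] at hdot
    exact (mul_eq_zero.1 hdot.symm).resolve_right (mul_pos two_pos (weightedInertia_pos hw hr)).ne'
  have hb : b * (2 * r 5) = 0 := by simpa [ha, gradF] using congrFun hab 0
  exact ⟨ha, (mul_eq_zero.1 hb).resolve_right (mul_pos two_pos (hr 5)).ne'⟩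

lemma exists_isLagrangePoint {w : Fin 6 → ℝ} (hw : ∀ i, 0 < w i) {c : ℝ} (hc : 0 < c) :
    ∃ (r : Fin 6 → ℝ) (lam sigma : ℝ),
      IsLagrangePoint w lam sigma r ∧ weightedInertia w r = c ∧ F r = 0 := by
  have hcompact : IsCompact {r | weightedInertia w r = c ∧ F r = 0} :=
    (isCompact_setOf_weightedInertia_eq hw c).inter_right
      (isClosed_eq continuous_F continuous_const)
  obtain ⟨r₀, hr₀, hr₀S⟩ := exists_pos_weightedInertia_eq_and_F_eq_zero hw hc
  obtain ⟨r, ⟨hI, hF⟩, hr, hmin⟩ := exists_isLocalMinOn_weightedPotential hw hcompact hr₀S hr₀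
  have hextr : IsLocalExtrOn (weightedPotential w)
      {z | ∀ k, ![weightedInertia w, F] k z = ![weightedInertia w, F] k r} r := by
    have hset : {z | ∀ k, ![weightedInertia w, F] k z = ![weightedInertia w, F] k r} =
        {z | weightedInertia w z = c ∧ F z = 0} := by
      simp [Fin.forall_fin_two, hI, hF]
    exact .inl (hset ▸ hmin)
  have hpotential := hasStrictFDerivAt_weightedPotential w fun i => (hr i).ne'
  have hinertia := hasStrictFDerivAt_weightedInertia w r
  have hgrad (k : Fin 2) : HasStrictFDerivAt (![weightedInertia w, F] k)
      (dotProductCLM (![fun i => w i * r i, gradF r] k)) r := by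
    fin_cases k
    exacts [hinertia, hasStrictFDerivAt_F r]
  obtain ⟨Λ, hΛ⟩ := exists_multipliers_of_linearIndependent hextr hpotential hgrad
    ((linearIndependent_gradients hw hr hF).map' dotProductCLM.toLinearMap dotProductCLM.ker)
  refine ⟨r, Λ 0, Λ 1, (isLagrangePoint_iff_fderiv hr).2 ?_, hI, hF⟩
  rw [hpotential.hasFDerivAt.fderiv, hinertia.hasFDerivAt.fderiv,
    (hasStrictFDerivAt_F r).hasFDerivAt.fderiv, add_assoc]
  simpa [Fin.sum_univ_two] using hΛ

theorem unique_critical_point_general {w : Fin 6 → ℝ} (hw : ∀ i, 0 < w i) {c : ℝ} (hc : 0 < c) :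
    ∃! r : Fin 6 → ℝ, (∀ i, 0 < r i) ∧ weightedInertia w r = c ∧ F r = 0 ∧
      ∃ lam sigma : ℝ,
        fderiv ℝ (weightedPotential w) r + lam • fderiv ℝ (weightedInertia w) r
          + sigma • fderiv ℝ F r = 0 := by
  obtain ⟨r, lam, sigma, h, hI, hF⟩ := exists_isLagrangePoint hw hc
  refine ⟨r, ⟨h.pos, hI, hF, lam, sigma, (isLagrangePoint_iff_fderiv h.pos).1 h⟩, ?_⟩
  rintro r' ⟨hr', hI', hF', lam', sigma', hlagrange⟩
  have h' := (isLagrangePoint_iff_fderiv hr').2 hlagrange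
  exact h'.eq_of_weightedInertia_eq hw h hF' hF (hI'.trans hI.symm)

section Masses

variable (m1 m2 m3 m4 : ℝ)

/-- The products `m_i m_j`, in the order of the mutual distances `r12, r13, r14, r23, r24, r34`. -/
def massProducts : Fin 6 → ℝ :=
  ![m1 * m2, m1 * m3, m1 * m4, m2 * m3, m2 * m4, m3 * m4]

lemma massProducts_pos {m1 m2 m3 m4 : ℝ} (hm1 : 0 < m1) (hm2 : 0 < m2) (hm3 : 0 < m3)
    (hm4 : 0 < m4) : ∀ i, 0 < massProducts m1 m2 m3 m4 i := by
  simp [massProducts, Fin.forall_fin_succ, hm1, hm2, hm3, hm4]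

lemma U_eq_weightedPotential :
    U m1 m2 m3 m4 = weightedPotential (massProducts m1 m2 m3 m4) := by
  ext r
  simp [U, weightedPotential, massProducts, Fin.sum_univ_six]

lemma Iner_eq_smul_weightedInertia :
    Iner m1 m2 m3 m4 = (m1 + m2 + m3 + m4)⁻¹ • weightedInertia (massProducts m1 m2 m3 m4) := by
  ext r
  simp only [Iner, one_div, mul_inv_rev, Fin.isValue, massProducts, Pi.smul_apply, weightedInertia,
    Fin.sum_univ_six, Matrix.cons_val_zero, Matrix.cons_val_one, Matrix.cons_val, smul_eq_mul]
  ring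

end Masses

/-- For any positive masses there is exactly one positive distance vector on
`{I = 1, F = 0}` satisfying the Lagrange condition
`∇U + λM∇I + σ∇F = 0`: the restriction of `U` to `M⁺` has a unique critical
point. -/
theorem unique_critical_point (m1 m2 m3 m4 : ℝ) (hm1 : 0 < m1) (hm2 : 0 < m2)
    (hm3 : 0 < m3) (hm4 : 0 < m4) :
    ∃! r : Fin 6 → ℝ, (∀ i, 0 < r i) ∧ Iner m1 m2 m3 m4 r = 1 ∧ F r = 0 ∧
      ∃ lam sigma : ℝ,
        fderiv ℝ (U m1 m2 m3 m4) r
            + (lam * (m1 + m2 + m3 + m4)) • fderiv ℝ (Iner m1 m2 m3 m4) r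
            + sigma • fderiv ℝ F r = 0 := by
  have hM : 0 < m1 + m2 + m3 + m4 := by positivity
  simpa [U_eq_weightedPotential, Iner_eq_smul_weightedInertia, fderiv_const_smul_field, smul_smul,
    hM.ne', inv_mul_eq_iff_eq_mul₀] using
    unique_critical_point_general (massProducts_pos hm1 hm2 hm3 hm4) hM
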